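/- arXiv:1307.0743 — 2 statements merged into one kernel-verified Lean document; each statement's English description precedes it below -/
import Mathlib

section
/- Let K ⊆ U ⊆ F be number fields such that U/K is a Galois extension, F/U is a cyclic (Galois with cyclic Galois group) extension, and F/K is Galois. Then there are infinitely many primes 𝔭_U of U such that 𝔭_U has exactly one prime of F lying above it and the prime 𝔭_K = 𝔭_U ∩ K of K splits completely in U/K (i.e. the number of primes of U above 𝔭_K equals [U : K]). -/
open IsDedekindDomain NumberField
open Filter Topology

lemma ncard_primesOver_le {R : Type*} [CommRing R] (p : Ideal R) [p.IsPrime] (S : Type*) [CommRing S]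
    [Algebra R S] [IsDomain R] [Module.Finite R S] [Module.Flat R S] :
    (p.primesOver S).ncard ≤ Module.finrank R S := by
  have : Fintype (p.primesOver S) := (Algebra.QuasiFinite.finite_primesOver p).fintype
  rw [← Ideal.sum_ramification_inertia_eq_finrank p S, ← Set.fintypeCard_eq_ncard, ← Finset.card_univ,
    Finset.card_eq_sum_ones]
  refine Finset.sum_le_sum fun q _ => ?_
  have := q.2.1
  exact Nat.mul_pos (Ideal.ramificationIdx_pos q.1 R) (Ideal.inertiaDeg_pos q.1 R)

section PartA
variable (L : Type*) [Field L] [NumberField L]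

lemma hasSum_ideal_aux (s : ℝ) (hs : 1 < s) :
    Summable (fun I : Ideal (𝓞 L) => (Ideal.absNorm I : ℝ) ^ (-s)) ∧
    ((∑' I : Ideal (𝓞 L), (Ideal.absNorm I : ℝ) ^ (-s) : ℝ) : ℂ) = dedekindZeta L s := by
  have hlim : Tendsto (fun n : ℕ ↦ (∑ k ∈ Finset.Icc 1 n,
      (Nat.card {I : Ideal (𝓞 L) // Ideal.absNorm I = k} : ℝ)) / (n : ℝ)) atTop
        (𝓝 (dedekindZeta_residue L)) := by
    refine ((Ideal.tendsto_norm_le_div_atTop₀ L).comp tendsto_natCast_atTop_atTop).congr fun n ↦ ?_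
    simp only [Function.comp_apply, Nat.cast_le, ← Nat.cast_sum]
    congr
    rw [← add_left_inj 1, ← Ideal.card_norm_le_eq_card_norm_le_add_one,
      show Finset.Icc 1 n = Finset.Ioc 0 n from Finset.Icc_succ_left_eq_Ioc _ _,
      show 1 = Nat.card {I : Ideal (𝓞 L) // Ideal.absNorm I = 0} by simp [Ideal.absNorm_eq_zero_iff],
      Finset.sum_Ioc_add_eq_sum_Icc (n.zero_le),
      ← Finset.card_preimage_eq_sum_card_image_eq (fun k _ ↦ Ideal.finite_setOfPred_absNorm_eq k)]
    simp [Set.coe_eq_subtype]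
  have hsum : LSeriesSummable (fun n ↦ ((Nat.card {I : Ideal (𝓞 L) // Ideal.absNorm I = n} : ℝ) : ℂ)) s := by
    refine LSeriesSummable_of_sum_norm_bigO_and_nonneg (r := 1) ?_ (fun _ => Nat.cast_nonneg _)
      zero_le_one (by simpa using hs)
    exact Asymptotics.isBigO_atTop_natCast_rpow_of_tendsto_div_rpow (a := dedekindZeta_residue L) (by simpa using hlim)
  have hterm : ∀ n : ℕ, LSeries.term (fun n ↦ ((Nat.card {I : Ideal (𝓞 L) // Ideal.absNorm I = n} : ℝ) : ℂ)) s n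
      = (((Nat.card {I : Ideal (𝓞 L) // Ideal.absNorm I = n} : ℝ) * (n : ℝ) ^ (-s) : ℝ) : ℂ) := by
    intro n
    rcases eq_or_ne n 0 with rfl | hn
    · have : (-s) ≠ 0 := by linarith
      simp [Real.zero_rpow this]
    · rw [LSeries.term_of_ne_zero hn, Complex.ofReal_mul, Real.rpow_neg (by positivity),
        Complex.ofReal_inv, Complex.ofReal_cpow (by positivity)]
      simp [div_eq_mul_inv]
  have hsum' : Summable (fun n : ℕ => (Nat.card {I : Ideal (𝓞 L) // Ideal.absNorm I = n} : ℝ) * (n : ℝ) ^ (-s)) := by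
    rw [← Complex.summable_ofReal]
    exact hsum.congr (fun n => hterm n)
  have fin : ∀ n : ℕ, Finite {I : Ideal (𝓞 L) // Ideal.absNorm I = n} := fun n =>
    Ideal.finite_setOfPred_absNorm_eq n
  let e := Equiv.sigmaFiberEquiv (fun I : Ideal (𝓞 L) => Ideal.absNorm I)
  have hfib : ∀ n : ℕ, ∑' I : {I : Ideal (𝓞 L) // Ideal.absNorm I = n}, (Ideal.absNorm (e ⟨n, I⟩) : ℝ) ^ (-s)
      = (Nat.card {I : Ideal (𝓞 L) // Ideal.absNorm I = n} : ℝ) * (n : ℝ) ^ (-s) := by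
    intro n
    have : ∀ I : {I : Ideal (𝓞 L) // Ideal.absNorm I = n}, (Ideal.absNorm (e ⟨n, I⟩) : ℝ) ^ (-s) = (n:ℝ)^(-s) := by
      rintro ⟨I, hI⟩
      simp [e, Equiv.sigmaFiberEquiv, hI]
    simp_rw [this]
    rw [tsum_const]; simp
  have hs1 : Summable (fun x => (Ideal.absNorm (e x) : ℝ) ^ (-s)) := by
    rw [summable_sigma_of_nonneg (fun _ => by positivity)]
    refine ⟨fun n => Summable.of_finite, ?_⟩
    simp_rw [hfib]
    exact hsum'
  have hs2 : Summable (fun I : Ideal (𝓞 L) => (Ideal.absNorm I : ℝ) ^ (-s)) := e.summable_iff.mp hs1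
  refine ⟨hs2, ?_⟩
  rw [← e.tsum_eq, Summable.tsum_sigma hs1]
  simp_rw [hfib]
  rw [dedekindZeta, LSeries, Complex.ofReal_tsum]
  exact tsum_congr fun n => (hterm n).symm

noncomputable def zetaR (s : ℝ) : ℝ := ∑' I : Ideal (𝓞 L), (Ideal.absNorm I : ℝ) ^ (-s)

lemma zetaR_tendsto : Tendsto (fun s : ℝ => (s - 1) * zetaR L s) (𝓝[>] 1) (𝓝 (dedekindZeta_residue L)) := by
  have h := tendsto_sub_one_mul_dedekindZeta_nhdsGT L
  have h2 : Tendsto (fun s : ℝ => (((s - 1) * zetaR L s : ℝ) : ℂ)) (𝓝[>] 1) (𝓝 ((dedekindZeta_residue L : ℝ) : ℂ)) := by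
    refine h.congr' ?_
    filter_upwards [self_mem_nhdsWithin] with s hs
    rw [← (hasSum_ideal_aux L s hs).2]
    simp [zetaR]
  have := (Complex.continuous_re.tendsto _).comp h2
  simpa [Function.comp_def] using this

lemma log_zetaR_bound : ∃ C : ℝ, ∀ᶠ s in 𝓝[>] (1:ℝ), |Real.log (zetaR L s) + Real.log (s - 1)| ≤ C ∧ 0 < zetaR L s := by
  have hpos := dedekindZeta_residue_pos L
  have h := (zetaR_tendsto L)
  have h2 := (h.log hpos.ne').abs
  refine ⟨|Real.log (dedekindZeta_residue L)| + 1, ?_⟩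
  filter_upwards [h2.eventually_le_const (lt_add_one _), h.eventually_const_lt hpos, self_mem_nhdsWithin] with s h1 h3 h4
  have h4' : 0 < s - 1 := sub_pos.mpr h4
  have h5 : 0 < zetaR L s := pos_of_mul_pos_right h3 h4'.le
  refine ⟨?_, h5⟩
  rwa [Real.log_mul h4'.ne' h5.ne', add_comm] at h1

lemma norm_pos (P : HeightOneSpectrum (𝓞 L)) : 1 < Ideal.absNorm P.asIdeal := by
  have h0 : Ideal.absNorm P.asIdeal ≠ 0 := by simpa [Ideal.absNorm_eq_zero_iff] using P.ne_bot
  have h1 : Ideal.absNorm P.asIdeal ≠ 1 := by simpa [Ideal.absNorm_eq_one_iff] using P.isPrime.ne_top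
  omega

lemma summable_prime (s : ℝ) (hs : 1 < s) :
    Summable (fun P : HeightOneSpectrum (𝓞 L) => (Ideal.absNorm P.asIdeal : ℝ) ^ (-s)) :=
  (hasSum_ideal_aux L s hs).1.comp_injective (i := fun P : HeightOneSpectrum (𝓞 L) => P.asIdeal)
    (fun _ _ h => HeightOneSpectrum.ext h)

lemma exists_decomp (I : Ideal (𝓞 L)) (hI : I ≠ ⊥) :
    ∃ (t : Finset (HeightOneSpectrum (𝓞 L))) (B : Ideal (𝓞 L)),
      I = (∏ P ∈ t, P.asIdeal) * B ^ 2 := by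
  classical
  induction I using UniqueFactorizationMonoid.induction_on_prime with
  | h₁ => exact absurd rfl hI
  | h₂ x hx => exact ⟨∅, 1, by rw [Finset.prod_empty, one_pow, mul_one]; exact (Ideal.isUnit_iff.mp hx).trans Ideal.one_eq_top.symm⟩
  | h₃ J Q hJ hQ ih =>
    obtain ⟨t, B, h⟩ := ih hJ
    let Q' : HeightOneSpectrum (𝓞 L) := ⟨Q, Ideal.isPrime_of_prime hQ, hQ.ne_zero⟩
    by_cases hm : Q' ∈ t
    · refine ⟨t.erase Q', Q * B, ?_⟩
      rw [h, ← Finset.mul_prod_erase t _ hm]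
      change Q * (Q * _ * _) = _
      ring
    · refine ⟨insert Q' t, B, ?_⟩
      rw [h, Finset.prod_insert hm]
      change Q * (_ * _) = Q * _ * _
      ring

lemma zetaR_le (s : ℝ) (hs : 1 < s) : zetaR L s ≤
    Real.exp (∑' P : HeightOneSpectrum (𝓞 L), (Ideal.absNorm P.asIdeal : ℝ) ^ (-s)) * zetaR L (2 * s) := by
  classical
  refine (hasSum_ideal_aux L s hs).1.tsum_le_of_sum_le fun J => ?_
  choose! t B hI using exists_decomp L
  set x : HeightOneSpectrum (𝓞 L) → ℝ := fun P => (Ideal.absNorm P.asIdeal : ℝ) ^ (-s) with hx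
  have hx0 : ∀ P, 0 ≤ x P := fun P => by positivity
  have h0 : ∑ I ∈ J, (Ideal.absNorm I : ℝ) ^ (-s) = ∑ I ∈ J.erase ⊥, (Ideal.absNorm I : ℝ) ^ (-s) := by
    rw [Finset.sum_erase]
    have : (-s) ≠ 0 := by linarith
    simp [Real.zero_rpow this]
  have h1 : ∀ I ∈ J.erase ⊥, (Ideal.absNorm I : ℝ) ^ (-s) =
      (∏ P ∈ t I, x P) * (Ideal.absNorm (B I) : ℝ) ^ (-(2 * s)) := by
    intro I hIJ
    have hne := Finset.ne_of_mem_erase hIJ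
    conv_lhs => rw [hI I hne]
    rw [map_mul, map_pow, map_prod]
    push_cast
    rw [Real.mul_rpow (by positivity) (by positivity), ← Real.rpow_natCast, ← Real.rpow_mul (by positivity),
      ← Real.finsetProd_rpow _ _ (fun _ _ => by positivity)]
    congr 2
    push_cast; ring
  have hinj : Set.InjOn (fun I => (t I, B I)) (J.erase ⊥ : Finset (Ideal (𝓞 L))) := by
    intro I h I2 h2 he
    have hne := Finset.ne_of_mem_erase h
    have hne2 := Finset.ne_of_mem_erase h2
    simp only [Prod.mk.injEq] at he
    rw [hI I hne, hI I2 hne2, he.1, he.2]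
  set T := (J.erase ⊥).image t
  set JB := (J.erase ⊥).image B
  rw [h0, Finset.sum_congr rfl h1]
  calc _ = ∑ y ∈ (J.erase ⊥).image (fun I => (t I, B I)), (∏ P ∈ y.1, x P) * (Ideal.absNorm y.2 : ℝ) ^ (-(2 * s)) := by
        rw [Finset.sum_image hinj]
    _ ≤ ∑ y ∈ T ×ˢ JB, (∏ P ∈ y.1, x P) * (Ideal.absNorm y.2 : ℝ) ^ (-(2 * s)) := by
        refine Finset.sum_le_sum_of_subset_of_nonneg ?_ fun y _ _ =>
          mul_nonneg (Finset.prod_nonneg fun P _ => hx0 P) (by positivity)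
        intro y hy
        obtain ⟨I, hIJ, rfl⟩ := Finset.mem_image.mp hy
        exact Finset.mem_product.mpr ⟨Finset.mem_image_of_mem _ hIJ, Finset.mem_image_of_mem _ hIJ⟩
    _ = (∑ a ∈ T, ∏ P ∈ a, x P) * ∑ b ∈ JB, (Ideal.absNorm b : ℝ) ^ (-(2 * s)) := by
        rw [Finset.sum_product, Finset.sum_mul_sum]
    _ ≤ _ := by
        refine mul_le_mul ?_ ?_ (Finset.sum_nonneg fun _ _ => by positivity) (Real.exp_pos _).le
        · calc _ ≤ ∑ a ∈ (T.sup id).powerset, ∏ P ∈ a, x P := by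
                refine Finset.sum_le_sum_of_subset_of_nonneg ?_ fun y _ _ => Finset.prod_nonneg fun P _ => hx0 P
                intro a ha
                exact Finset.mem_powerset.mpr (Finset.le_sup (f := id) ha)
            _ = ∏ P ∈ T.sup id, (1 + x P) := (Finset.prod_one_add _).symm
            _ ≤ ∏ P ∈ T.sup id, Real.exp (x P) := by
                refine Finset.prod_le_prod (fun P _ => by have := hx0 P; positivity) fun P _ => ?_
                rw [add_comm]; exact Real.add_one_le_exp _
            _ = Real.exp (∑ P ∈ T.sup id, x P) := (Real.exp_sum _ _).symm
            _ ≤ _ := Real.exp_le_exp.mpr ((summable_prime L s hs).sum_le_tsum _ fun P _ => hx0 P)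
        · exact (hasSum_ideal_aux L (2*s) (by linarith)).1.sum_le_tsum _ fun P _ => by positivity

lemma rpow_anti (I : Ideal (𝓞 L)) {a b : ℝ} (ha : 0 < a) (hab : a ≤ b) :
    (Ideal.absNorm I : ℝ) ^ (-b) ≤ (Ideal.absNorm I : ℝ) ^ (-a) := by
  rcases Nat.eq_zero_or_pos (Ideal.absNorm I) with h | h
  · rw [h, Nat.cast_zero, Real.zero_rpow (by linarith), Real.zero_rpow (by linarith)]
  · exact Real.rpow_le_rpow_of_exponent_le (by exact_mod_cast h) (by linarith)

lemma zetaR_anti {a b : ℝ} (ha : 1 < a) (hab : a ≤ b) : zetaR L b ≤ zetaR L a :=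
  Summable.tsum_le_tsum (fun I => rpow_anti L I (by linarith) hab)
    (hasSum_ideal_aux L b (by linarith)).1 (hasSum_ideal_aux L a ha).1

lemma sum_prime_le (s : ℝ) (hs : 1 < s) :
    ∑' P : HeightOneSpectrum (𝓞 L), (Ideal.absNorm P.asIdeal : ℝ) ^ (-s) ≤
      Real.log (zetaR L s) + zetaR L 2 := by
  classical
  refine (summable_prime L s hs).tsum_le_of_sum_le fun T => ?_
  set x : HeightOneSpectrum (𝓞 L) → ℝ := fun P => (Ideal.absNorm P.asIdeal : ℝ) ^ (-s) with hx
  have hx0 : ∀ P, 0 ≤ x P := fun P => by positivity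
  have h1 : ∏ P ∈ T, (1 + x P) ≤ zetaR L s := by
    rw [Finset.prod_one_add]
    have h2 : ∀ t ∈ T.powerset, ∏ P ∈ t, x P = (Ideal.absNorm (∏ P ∈ t, P.asIdeal) : ℝ) ^ (-s) := by
      intro t _
      rw [map_prod]; push_cast
      rw [← Real.finsetProd_rpow _ _ (fun _ _ => by positivity)]
    rw [Finset.sum_congr rfl h2]
    have hsub : ∀ t t' : Finset (HeightOneSpectrum (𝓞 L)), ∏ P ∈ t, P.asIdeal = ∏ P ∈ t', P.asIdeal → t ⊆ t' := by
      intro t t' h P hP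
      have hd : P.asIdeal ∣ ∏ P ∈ t', P.asIdeal := h ▸ Finset.dvd_prod_of_mem _ hP
      obtain ⟨Q, hQ, hPQ⟩ := (P.prime.dvd_finsetProd_iff _).mp hd
      have : P = Q := HeightOneSpectrum.ext
        ((Q.isMaximal.eq_of_le P.isPrime.ne_top (Ideal.le_of_dvd hPQ)).symm)
      rwa [this]
    have hinj : Set.InjOn (fun t : Finset (HeightOneSpectrum (𝓞 L)) => ∏ P ∈ t, P.asIdeal) T.powerset :=
      fun t _ t' _ h => (hsub t t' h).antisymm (hsub t' t h.symm)
    rw [← Finset.sum_image (f := fun I : Ideal (𝓞 L) => (Ideal.absNorm I : ℝ) ^ (-s)) hinj]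
    exact (hasSum_ideal_aux L s hs).1.sum_le_tsum _ fun P _ => by positivity
  have h3 : ∑ P ∈ T, Real.log (1 + x P) ≤ Real.log (zetaR L s) := by
    rw [← Real.log_prod (fun P _ => by have := hx0 P; positivity)]
    exact Real.log_le_log (Finset.prod_pos fun P _ => by have := hx0 P; positivity) h1
  have h4 : ∀ P, x P ≤ Real.log (1 + x P) + (Ideal.absNorm P.asIdeal : ℝ) ^ (-(2:ℝ)) := by
    intro P
    have h5 : x P ^ 2 ≤ (Ideal.absNorm P.asIdeal : ℝ) ^ (-(2:ℝ)) := by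
      simp only [hx]
      rw [← Real.rpow_natCast, ← Real.rpow_mul (by positivity)]
      have := rpow_anti L P.asIdeal (a := 2) (b := s * 2) (by norm_num) (by linarith)
      simpa using this
    have h6 : 1 - (1 + x P)⁻¹ ≤ Real.log (1 + x P) :=
      Real.one_sub_inv_le_log_of_pos (by have := hx0 P; positivity)
    have h7 : x P - x P ^ 2 ≤ 1 - (1 + x P)⁻¹ := by
      have h8 : 0 < 1 + x P := by have := hx0 P; positivity
      have : 1 - (1 + x P)⁻¹ - (x P - x P ^ 2) = x P ^ 3 / (1 + x P) := by field_simp; ring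
      have : 0 ≤ x P ^ 3 / (1 + x P) := by have := hx0 P; positivity
      linarith
    linarith
  have h5 : ∑ P ∈ T, (Ideal.absNorm P.asIdeal : ℝ) ^ (-(2:ℝ)) ≤ zetaR L 2 := by
    have hinj : Set.InjOn (fun P : HeightOneSpectrum (𝓞 L) => P.asIdeal) T := fun _ _ _ _ h => HeightOneSpectrum.ext h
    rw [← Finset.sum_image (f := fun I : Ideal (𝓞 L) => (Ideal.absNorm I : ℝ) ^ (-(2:ℝ))) hinj]
    exact (hasSum_ideal_aux L 2 (by norm_num)).1.sum_le_tsum _ fun P _ => by positivity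
  calc ∑ P ∈ T, x P ≤ ∑ P ∈ T, (Real.log (1 + x P) + (Ideal.absNorm P.asIdeal : ℝ) ^ (-(2:ℝ))) :=
        Finset.sum_le_sum fun P _ => h4 P
    _ ≤ _ := by rw [Finset.sum_add_distrib]; linarith

lemma summable_nonprime : Summable (fun P : HeightOneSpectrum (𝓞 L) =>
    if (Ideal.absNorm P.asIdeal).Prime then (0:ℝ) else (Ideal.absNorm P.asIdeal : ℝ) ^ (-(1:ℝ))) := by
  classical
  have key : ∀ P : HeightOneSpectrum (𝓞 L), ∃ p : ℕ, p.Prime ∧ P.asIdeal ∈ (Ideal.span {(p:ℤ)}).primesOver (𝓞 L) := by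
    intro P
    have := P.isPrime
    have : NeZero P.asIdeal := ⟨P.ne_bot⟩
    refine ⟨Ideal.absNorm (P.asIdeal.under ℤ), Nat.absNorm_under_prime _, P.isPrime, ⟨?_⟩⟩
    rw [Int.ideal_span_absNorm_eq_self]
  choose p hp hP using key
  have hsq : Summable (fun n : ℕ => (n : ℝ) ^ (-(2:ℝ))) := by
    simpa [Real.rpow_neg] using (Real.summable_nat_rpow_inv (p := 2)).mpr (by norm_num)
  refine summable_of_sum_le (c := Module.finrank ℚ L * ∑' n : ℕ, (n : ℝ) ^ (-(2:ℝ))) (fun P => by positivity) fun T => ?_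
  have hle : ∀ P : HeightOneSpectrum (𝓞 L), (if (Ideal.absNorm P.asIdeal).Prime then (0:ℝ) else (Ideal.absNorm P.asIdeal : ℝ) ^ (-(1:ℝ)))
      ≤ (p P : ℝ) ^ (-(2:ℝ)) := by
    intro P
    split_ifs with h
    · positivity
    · have := (hP P).1
      have := (hP P).2
      have h1 : p P ^ P.asIdeal.inertiaDeg ℤ = Ideal.absNorm P.asIdeal :=
        Ideal.pow_inertiaDeg (p P) P.asIdeal
      have h2 : 2 ≤ P.asIdeal.inertiaDeg ℤ := by
        by_contra hlt
        have h3 := Ideal.inertiaDeg_pos P.asIdeal ℤ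
        have h4 : P.asIdeal.inertiaDeg ℤ = 1 := by omega
        rw [h4, pow_one] at h1
        exact h (h1 ▸ hp P)
      have h3 : (p P : ℝ) ^ 2 ≤ Ideal.absNorm P.asIdeal := by
        rw [← h1]
        exact_mod_cast Nat.pow_le_pow_right (hp P).pos h2
      have h4 : (0:ℝ) < p P := by exact_mod_cast (hp P).pos
      rw [Real.rpow_neg (by positivity), Real.rpow_neg (by positivity), Real.rpow_one]
      refine inv_anti₀ (by positivity) ?_
      exact_mod_cast h3
  have hcard : ∀ q : ℕ, q.Prime → (T.filter (fun P => p P = q)).card ≤ Module.finrank ℚ L := by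
    intro q hq
    have hmax : (Ideal.span {(q:ℤ)}).IsPrime := by
      rw [Ideal.span_singleton_prime (by exact_mod_cast hq.ne_zero)]
      exact Nat.prime_iff_prime_int.mp hq
    have hfin : ((Ideal.span {(q:ℤ)}).primesOver (𝓞 L)).Finite :=
      Algebra.QuasiFinite.finite_primesOver _
    rw [← RingOfIntegers.rank L]
    refine le_trans ?_ (ncard_primesOver_le (Ideal.span {(q:ℤ)}) (𝓞 L))
    rw [← Set.ncard_coe_finset]
    refine Set.ncard_le_ncard_of_injOn (fun P : HeightOneSpectrum (𝓞 L) => P.asIdeal) ?_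
      (fun _ _ _ _ h => HeightOneSpectrum.ext h) hfin
    intro P hPT
    have : p P = q := by simpa using (Finset.mem_filter.mp hPT).2
    exact this ▸ hP P
  calc _ ≤ ∑ P ∈ T, (p P : ℝ) ^ (-(2:ℝ)) := Finset.sum_le_sum fun P _ => hle P
    _ = ∑ q ∈ T.image p, ((T.filter (fun P => p P = q)).card : ℝ) * (q : ℝ) ^ (-(2:ℝ)) := by
        rw [Finset.sum_comp (fun q : ℕ => (q : ℝ) ^ (-(2:ℝ))) p]
        simp
    _ ≤ ∑ q ∈ T.image p, (Module.finrank ℚ L : ℝ) * (q : ℝ) ^ (-(2:ℝ)) := by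
        refine Finset.sum_le_sum fun q hq => mul_le_mul_of_nonneg_right ?_ (by positivity)
        obtain ⟨P, _, rfl⟩ := Finset.mem_image.mp hq
        exact_mod_cast hcard _ (hp P)
    _ ≤ _ := by
        rw [← Finset.mul_sum]
        exact mul_le_mul_of_nonneg_left (hsq.sum_le_tsum _ fun _ _ => by positivity) (by positivity)

lemma deg_one_sum : ∃ C : ℝ, ∀ᶠ s in 𝓝[>] (1:ℝ),
    |(∑' P : HeightOneSpectrum (𝓞 L), if (Ideal.absNorm P.asIdeal).Prime then (Ideal.absNorm P.asIdeal : ℝ) ^ (-s) else 0)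
      + Real.log (s - 1)| ≤ C := by
  obtain ⟨C, hC⟩ := log_zetaR_bound L
  set W := ∑' P : HeightOneSpectrum (𝓞 L),
    if (Ideal.absNorm P.asIdeal).Prime then (0:ℝ) else (Ideal.absNorm P.asIdeal : ℝ) ^ (-(1:ℝ))
  refine ⟨C + |Real.log (zetaR L 2)| + |zetaR L 2| + W, ?_⟩
  filter_upwards [hC, self_mem_nhdsWithin, Ioo_mem_nhdsGT (show (1:ℝ) < 2 by norm_num)] with s ⟨h1, h2⟩ h3 h4
  have hs : 1 < s := h3
  have hS := summable_prime L s hs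
  have e1 := sum_prime_le L s hs
  have e2 := zetaR_le L s hs
  set S := ∑' P : HeightOneSpectrum (𝓞 L), (Ideal.absNorm P.asIdeal : ℝ) ^ (-s)
  have e3 := zetaR_anti L (a := 2) (b := 2 * s) (by norm_num) (by linarith)
  have hz2 : 0 < zetaR L (2 * s) := by
    by_contra h
    have := mul_nonpos_of_nonneg_of_nonpos (Real.exp_pos S).le (not_lt.mp h)
    linarith
  have e4 : Real.log (zetaR L s) ≤ S + Real.log (zetaR L 2) := by
    have := Real.log_le_log h2 e2
    rw [Real.log_mul (Real.exp_pos _).ne' hz2.ne', Real.log_exp] at this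
    linarith [Real.log_le_log hz2 e3]
  have hN : Summable (fun P : HeightOneSpectrum (𝓞 L) =>
    if (Ideal.absNorm P.asIdeal).Prime then (0:ℝ) else (Ideal.absNorm P.asIdeal : ℝ) ^ (-s)) := by
    refine hS.of_nonneg_of_le (fun P => by positivity) fun P => ?_
    split_ifs
    · positivity
    · rfl
  have hD : Summable (fun P : HeightOneSpectrum (𝓞 L) =>
    if (Ideal.absNorm P.asIdeal).Prime then (Ideal.absNorm P.asIdeal : ℝ) ^ (-s) else 0) := by
    refine hS.of_nonneg_of_le (fun P => by positivity) fun P => ?_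
    split_ifs
    · rfl
    · positivity
  have e5 := hD.tsum_add hN
  have e6 : ∑' P : HeightOneSpectrum (𝓞 L), ((if (Ideal.absNorm P.asIdeal).Prime then (Ideal.absNorm P.asIdeal : ℝ) ^ (-s) else 0) +
    (if (Ideal.absNorm P.asIdeal).Prime then (0:ℝ) else (Ideal.absNorm P.asIdeal : ℝ) ^ (-s))) = S := by
    refine tsum_congr fun P => ?_
    split_ifs <;> simp
  have e7 : ∑' P : HeightOneSpectrum (𝓞 L),
    (if (Ideal.absNorm P.asIdeal).Prime then (0:ℝ) else (Ideal.absNorm P.asIdeal : ℝ) ^ (-s)) ≤ W := by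
    refine Summable.tsum_le_tsum (fun P => ?_) hN (summable_nonprime L)
    split_ifs
    · rfl
    · exact rpow_anti L _ (by norm_num) hs.le
  have e8 : 0 ≤ ∑' P : HeightOneSpectrum (𝓞 L),
    (if (Ideal.absNorm P.asIdeal).Prime then (0:ℝ) else (Ideal.absNorm P.asIdeal : ℝ) ^ (-s)) :=
    tsum_nonneg fun P => by positivity
  rw [e6] at e5
  have := abs_le.mp h1
  have := le_abs_self (Real.log (zetaR L 2))
  have := le_abs_self (zetaR L 2)
  have := abs_nonneg (Real.log (zetaR L 2))
  have := abs_nonneg (zetaR L 2)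
  rw [abs_le]
  constructor <;> linarith
end PartA

section Gal
variable (M L : Type*) [Field M] [Field L] [NumberField M] [NumberField L] [Algebra M L]

lemma finite_ramified : ∃ R : Set (HeightOneSpectrum (𝓞 M)), R.Finite ∧ ∀ p ∉ R,
    ∀ q : Ideal (𝓞 L), q.IsPrime → q.LiesOver p.asIdeal → q.ramificationIdx (𝓞 M) = 1 := by
  have hd : differentIdeal (𝓞 M) (𝓞 L) ≠ ⊥ := differentIdeal_ne_bot
  have hfin : {v : HeightOneSpectrum (𝓞 L) | v.asIdeal ∣ differentIdeal (𝓞 M) (𝓞 L)}.Finite :=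
    Ideal.finite_factors hd
  refine ⟨{p | ∃ v ∈ {v : HeightOneSpectrum (𝓞 L) | v.asIdeal ∣ differentIdeal (𝓞 M) (𝓞 L)},
    v.asIdeal.under (𝓞 M) = p.asIdeal}, ?_, ?_⟩
  · have := (hfin.image (fun v => v.asIdeal.under (𝓞 M))).preimage
      (f := fun p : HeightOneSpectrum (𝓞 M) => p.asIdeal) (fun _ _ _ _ h => HeightOneSpectrum.ext h)
    exact this
  · intro p hp q hq hqp
    have hq0 : q ≠ ⊥ := by
      rintro rfl
      apply p.ne_bot
      rw [hqp.over]; simp [Ideal.under]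
      
    rw [Ideal.ramificationIdx_eq_one_iff, ← not_dvd_differentIdeal_iff]
    intro h
    exact hp ⟨⟨q, hq, hq0⟩, h, hqp.over.symm⟩





lemma efg [IsGalois M L] (p : Ideal (𝓞 M)) [p.IsPrime] (q : Ideal (𝓞 L)) [q.IsPrime] [q.LiesOver p] :
    (p.primesOver (𝓞 L)).ncard * (q.ramificationIdx (𝓞 M) * q.inertiaDeg (𝓞 M)) = Module.finrank M L := by
  rw [← IsGaloisGroup.card_eq_finrank (L ≃ₐ[M] L) M L,
    ← Ideal.ncard_primesOver_mul_ramificationIdxIn_mul_inertiaDegIn p (𝓞 L) (L ≃ₐ[M] L),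
    Ideal.ramificationIdxIn_eq_ramificationIdx p q (L ≃ₐ[M] L), Ideal.inertiaDegIn_eq_inertiaDeg p q (L ≃ₐ[M] L)]

lemma norm_prime_iff (p : Ideal (𝓞 M)) [p.IsPrime] (q : Ideal (𝓞 L)) [q.IsPrime] [q.LiesOver p] :
    (Ideal.absNorm q).Prime ↔ (Ideal.absNorm p).Prime ∧ q.inertiaDeg (𝓞 M) = 1 := by
  rw [← Ideal.absNorm_pow_inertiaDeg p q]
  constructor
  · intro h
    have := h.eq_one_of_pow
    rw [this, pow_one] at h
    exact ⟨h, this⟩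
  · rintro ⟨h, h1⟩
    rwa [h1, pow_one]
end Gal

section Fib
variable (M L : Type*) [Field M] [Field L] [NumberField M] [NumberField L] [Algebra M L]

noncomputable def underHOS (P : HeightOneSpectrum (𝓞 L)) : HeightOneSpectrum (𝓞 M) :=
  ⟨P.asIdeal.under (𝓞 M), inferInstance, fun h => P.ne_bot (Ideal.eq_bot_of_comap_eq_bot h)⟩

lemma image_hos (p : HeightOneSpectrum (𝓞 M)) :
    Set.image HeightOneSpectrum.asIdeal {P : HeightOneSpectrum (𝓞 L) | P.asIdeal.under (𝓞 M) = p.asIdeal} =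
      p.asIdeal.primesOver (𝓞 L) := by
  ext q
  constructor
  · rintro ⟨P, hP, rfl⟩
    exact ⟨P.isPrime, ⟨hP.symm⟩⟩
  · rintro ⟨hq, ⟨hqp⟩⟩
    refine ⟨⟨q, hq, ?_⟩, hqp.symm, rfl⟩
    rintro rfl
    apply p.ne_bot
    rw [hqp]; simp [Ideal.under]

lemma hos_inj : Function.Injective (HeightOneSpectrum.asIdeal : HeightOneSpectrum (𝓞 L) → _) :=
  fun _ _ h => HeightOneSpectrum.ext h

lemma ncard_hos (p : HeightOneSpectrum (𝓞 M)) :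
    {P : HeightOneSpectrum (𝓞 L) | P.asIdeal.under (𝓞 M) = p.asIdeal}.ncard =
      (p.asIdeal.primesOver (𝓞 L)).ncard := by
  rw [← image_hos, Set.ncard_image_of_injective _ (hos_inj L)]

lemma finite_hos (p : HeightOneSpectrum (𝓞 M)) :
    {P : HeightOneSpectrum (𝓞 L) | P.asIdeal.under (𝓞 M) = p.asIdeal}.Finite := by
  apply Set.Finite.of_finite_image (f := HeightOneSpectrum.asIdeal) _ ((hos_inj L).injOn)
  rw [image_hos]
  exact Algebra.QuasiFinite.finite_primesOver _

noncomputable def cOver (p : HeightOneSpectrum (𝓞 M)) : ℕ :=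
  {P : HeightOneSpectrum (𝓞 L) | P.asIdeal.under (𝓞 M) = p.asIdeal ∧ (Ideal.absNorm P.asIdeal).Prime}.ncard

lemma hasSum_cOver (s : ℝ) (hs : 1 < s) :
    HasSum (fun p : HeightOneSpectrum (𝓞 M) => (cOver M L p : ℝ) * (Ideal.absNorm p.asIdeal : ℝ) ^ (-s))
    (∑' P : HeightOneSpectrum (𝓞 L), if (Ideal.absNorm P.asIdeal).Prime then
      (Ideal.absNorm P.asIdeal : ℝ)^(-s) else 0) := by
  classical
  have hsum : Summable (fun P : HeightOneSpectrum (𝓞 L) => if (Ideal.absNorm P.asIdeal).Prime then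
      (Ideal.absNorm P.asIdeal : ℝ)^(-s) else 0) := by
    refine Summable.of_nonneg_of_le (fun P => ?_) (fun P => ?_) (summable_prime L s hs)
    · split_ifs <;> positivity
    · split_ifs
      · exact le_rfl
      · positivity
  have h1 := (Equiv.sigmaFiberEquiv (underHOS M L)).hasSum_iff.mpr hsum.hasSum
  refine h1.sigma fun p => ?_
  have hset : {P : HeightOneSpectrum (𝓞 L) | P.asIdeal.under (𝓞 M) = p.asIdeal} =
      {P | underHOS M L P = p} := by
    ext P
    exact ⟨fun h => HeightOneSpectrum.ext h, fun h => congrArg HeightOneSpectrum.asIdeal h⟩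
  have hf : {P | underHOS M L P = p}.Finite := hset ▸ finite_hos M L p
  have : Fintype {P // underHOS M L P = p} := hf.fintype
  suffices hsuf : (cOver M L p : ℝ) * (Ideal.absNorm p.asIdeal : ℝ) ^ (-s) =
      ∑ P : {P // underHOS M L P = p}, (if (Ideal.absNorm P.1.asIdeal).Prime then
      (Ideal.absNorm P.1.asIdeal : ℝ)^(-s) else 0) by
    rw [hsuf]; exact hasSum_fintype _
  have : ∀ P : {P // underHOS M L P = p}, (if (Ideal.absNorm P.1.asIdeal).Prime then
      (Ideal.absNorm P.1.asIdeal : ℝ)^(-s) else 0) = if (Ideal.absNorm P.1.asIdeal).Prime then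
      (Ideal.absNorm p.asIdeal : ℝ)^(-s) else 0 := by
    rintro ⟨P, rfl⟩
    have := P.isPrime
    have : P.asIdeal.LiesOver (underHOS M L P).asIdeal := ⟨rfl⟩
    split_ifs with h
    · have h2 := (norm_prime_iff M L (underHOS M L P).asIdeal P.asIdeal).mp h
      have h3 := Ideal.absNorm_pow_inertiaDeg (underHOS M L P).asIdeal P.asIdeal
      rw [h2.2, pow_one] at h3
      simp only [h3]
    · rfl
  rw [Finset.sum_congr rfl fun P _ => this P, ← Finset.sum_filter, Finset.sum_const, nsmul_eq_mul]
  congr 2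
  rw [cOver, ← Set.ncard_coe_finset, ← Set.ncard_image_of_injective _ (Subtype.val_injective (p := fun P => underHOS M L P = p))]
  congr 1
  ext P
  simp only [Set.mem_ofPred_eq, Set.mem_image, Finset.coe_filter, Finset.mem_univ, true_and, Subtype.exists, exists_and_left, exists_prop, exists_eq_right_right]
  constructor
  · rintro ⟨h1, h2⟩; exact ⟨h2, HeightOneSpectrum.ext h1⟩
  · rintro ⟨h1, h2⟩; exact ⟨congrArg HeightOneSpectrum.asIdeal h2, h1⟩

lemma cOver_eq [IsGalois M L] : ∃ R : Set (HeightOneSpectrum (𝓞 M)), R.Finite ∧ ∀ p ∉ R,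
    cOver M L p = if (Ideal.absNorm p.asIdeal).Prime ∧
      (p.asIdeal.primesOver (𝓞 L)).ncard = Module.finrank M L then Module.finrank M L else 0 := by
  obtain ⟨R, hR, h⟩ := finite_ramified M L
  refine ⟨R, hR, fun p hp => ?_⟩
  have hpos : 0 < Module.finrank M L := Module.finrank_pos
  have key : ∀ P : HeightOneSpectrum (𝓞 L), P.asIdeal.under (𝓞 M) = p.asIdeal →
      ((Ideal.absNorm P.asIdeal).Prime ↔ (Ideal.absNorm p.asIdeal).Prime ∧
      (p.asIdeal.primesOver (𝓞 L)).ncard = Module.finrank M L) := by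
    intro P hP
    have := P.isPrime
    have := p.isPrime
    have : P.asIdeal.LiesOver p.asIdeal := ⟨hP.symm⟩
    rw [norm_prime_iff M L p.asIdeal P.asIdeal]
    have e := efg M L p.asIdeal P.asIdeal
    rw [h p hp P.asIdeal inferInstance inferInstance, one_mul] at e
    refine and_congr_right fun _ => ⟨fun h => by simpa [h] using e, fun h => ?_⟩
    rw [h] at e
    exact Nat.eq_of_mul_eq_mul_left hpos (e.trans (mul_one _).symm)
  split_ifs with hc
  · rw [← hc.2, ← ncard_hos, cOver]
    congr 1
    ext P
    exact ⟨fun h => h.1, fun h => ⟨h, (key P h).mpr hc⟩⟩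
  · rw [cOver, Set.ncard_eq_zero ((finite_hos M L p).subset fun _ h => h.1)]
    ext P
    simp only [Set.mem_ofPred_eq, Set.mem_empty_iff_false, iff_false]
    rintro ⟨h1, h2⟩
    exact hc ((key P h1).mp h2)
end Fib
open Pointwise

lemma cyclic_le {G : Type*} [Group G] [Finite G] [IsCyclic G] (D H : Subgroup G)
    (h : Nat.card D ∣ Nat.card H) : D ≤ H := by
  classical
  have : Fintype G := Fintype.ofFinite G
  have hH : 0 < Nat.card H := Nat.card_pos
  have hsub : (H : Set G).toFinset ⊆ Finset.univ.filter (fun a : G => a ^ Nat.card H = 1) := by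
    intro a ha
    rw [Set.mem_toFinset] at ha
    have : a ^ Nat.card H = 1 := congrArg Subtype.val (pow_card_eq_one' (x := (⟨a, ha⟩ : H)))
    exact Finset.mem_filter.mpr ⟨Finset.mem_univ _, this⟩
  have heq := Finset.eq_of_subset_of_card_le hsub (by
    refine (IsCyclic.card_pow_eq_one_le hH).trans ?_
    rw [Set.toFinset_card, Nat.card_eq_fintype_card]; exact le_of_eq (Fintype.card_congr (Equiv.refl _)))
  intro a ha
  have h1 : a ^ Nat.card H = 1 := by
    obtain ⟨k, hk⟩ := h
    have : a ^ Nat.card D = 1 := congrArg Subtype.val (pow_card_eq_one' (x := (⟨a, ha⟩ : D)))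
    rw [hk, pow_mul, this, one_pow]
  have : a ∈ (H : Set G).toFinset := by rw [heq]; exact Finset.mem_filter.mpr ⟨Finset.mem_univ _, h1⟩
  simpa using this

lemma cyclic_exists {G : Type*} [Group G] [Finite G] [IsCyclic G] (m : ℕ) (hm : m ∣ Nat.card G) :
    ∃ H : Subgroup G, Nat.card H = m := by
  obtain ⟨g, hg⟩ := IsCyclic.exists_ofOrder_eq_natCard (α := G)
  obtain ⟨k, hk⟩ := hm
  have : 0 < Nat.card G := Nat.card_pos
  have hk0 : k ≠ 0 := by rintro rfl; omega
  refine ⟨Subgroup.zpowers (g ^ k), ?_⟩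
  rw [Nat.card_zpowers, orderOf_pow_of_dvd hk0 (hg ▸ ⟨m, by rw [hk, mul_comm]⟩), hg, hk,
    Nat.mul_div_cancel _ (Nat.pos_of_ne_zero hk0)]

section L1
variable (U F : Type*) [Field U] [Field F] [NumberField U] [NumberField F] [Algebra U F] [IsGalois U F]
  [IsCyclic (F ≃ₐ[U] F)]

lemma ncard_tower (E : IntermediateField U F) [IsGalois U E] (p : HeightOneSpectrum (𝓞 U)) :
    (p.asIdeal.primesOver (𝓞 E)).ncard = Module.finrank U E ↔
      Module.finrank U E ∣ (p.asIdeal.primesOver (𝓞 F)).ncard := by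
  have := p.isPrime
  obtain ⟨⟨Q, hQ, hQp⟩⟩ : Nonempty (p.asIdeal.primesOver (𝓞 F)) := inferInstance
  let P : Ideal (𝓞 E) := Q.under (𝓞 E)
  have : Q.LiesOver P := ⟨rfl⟩
  have : P.LiesOver p.asIdeal := inferInstance
  have hmul := Ideal.ncard_primesOver_mul_ncard_primesOver (p := p.asIdeal) P (E ≃ₐ[U] E) (𝓞 F) (F ≃ₐ[U] F)
  constructor
  · intro h
    rw [← h, ← hmul]; exact dvd_mul_right _ _
  intro h
  let H : Subgroup (F ≃ₐ[U] F) := fixingSubgroup (F ≃ₐ[U] F) (E : Set F)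
  have : IsGaloisGroup H E F := inferInstance
  have : IsGaloisGroup H (𝓞 E) (𝓞 F) := IsGaloisGroup.of_isFractionRing H (𝓞 E) (𝓞 F) E F
  have hH := IsGaloisGroup.card_eq_finrank H E F
  have hn := IsGaloisGroup.card_eq_finrank (F ≃ₐ[U] F) U F
  have htow := Module.finrank_mul_finrank U E F
  let D := MulAction.stabilizer (F ≃ₐ[U] F) Q
  have hD : D.index = (p.asIdeal.primesOver (𝓞 F)).ncard := by
    rw [← Algebra.IsInvariant.orbit_eq_primesOver (𝓞 U) (𝓞 F) (F ≃ₐ[U] F) p.asIdeal Q, ← MulAction.index_stabilizer]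
  have hD' : (MulAction.stabilizer H Q).index = (P.primesOver (𝓞 F)).ncard := by
    rw [← Algebra.IsInvariant.orbit_eq_primesOver (𝓞 E) (𝓞 F) H P Q]
    exact MulAction.index_stabilizer (G := H) Q
  have hst : MulAction.stabilizer H Q = D.subgroupOf H := by
    ext x; rfl
  have hE : 0 < Module.finrank U E := Module.finrank_pos
  have hDc := D.card_mul_index
  have hDH : D ≤ H := by
    apply cyclic_le
    obtain ⟨k, hk⟩ := h
    rw [hD, hk, hn, ← htow] at hDc
    refine ⟨k, ?_⟩
    rw [hH]
    apply Nat.eq_of_mul_eq_mul_left hE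
    rw [← hDc]; ring
  have h1 := (D.subgroupOf H).card_mul_index
  rw [Nat.card_congr (Subgroup.subgroupOfEquivOfLe hDH).toEquiv, ← hst, hD', hH] at h1
  rw [hD, ← hmul, hn, ← htow, ← h1] at hDc
  have hp0 : 0 < Nat.card D := Nat.card_pos
  have hg0 : 0 < (P.primesOver (𝓞 F)).ncard := by
    rw [← hD']; exact Nat.pos_of_ne_zero Subgroup.index_ne_zero_of_finite
  apply Nat.eq_of_mul_eq_mul_right (Nat.mul_pos hp0 hg0)
  rw [← hDc]; ring

lemma exists_partB (d : ℕ) (hd : d ∣ Module.finrank U F) :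
    ∃ (D : ℝ → ℝ) (c : HeightOneSpectrum (𝓞 U) → ℕ) (R : Set (HeightOneSpectrum (𝓞 U))) (C : ℝ),
      R.Finite ∧
      (∀ s > 1, HasSum (fun p => (c p : ℝ) * (Ideal.absNorm p.asIdeal : ℝ) ^ (-s)) (D s)) ∧
      (∀ᶠ s in 𝓝[>] (1:ℝ), |D s + Real.log (s - 1)| ≤ C) ∧
      ∀ p ∉ R, c p = if (Ideal.absNorm p.asIdeal).Prime ∧ d ∣ (p.asIdeal.primesOver (𝓞 F)).ncard
        then d else 0 := by
  obtain ⟨m, hm⟩ := hd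
  have hn := IsGaloisGroup.card_eq_finrank (F ≃ₐ[U] F) U F
  obtain ⟨H, hH⟩ := cyclic_exists (G := F ≃ₐ[U] F) m ⟨d, by rw [hn, hm, mul_comm]⟩
  let E := IntermediateField.fixedField H
  have hEF : Module.finrank E F = m := (IntermediateField.finrank_fixedField_eq_card H).trans hH
  have hpos : 0 < Module.finrank U F := Module.finrank_pos
  have hEd : Module.finrank U E = d := by
    have := Module.finrank_mul_finrank U E F
    rw [hEF, hm] at this
    exact Nat.eq_of_mul_eq_mul_right (Nat.pos_of_ne_zero fun h => by simp [h] at hm; omega) this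
  have : H.Normal := by
    have : IsMulCommutative (F ≃ₐ[U] F) := inferInstance
    infer_instance
  have : IsGalois U E := IsGalois.of_fixedField_normal_subgroup H
  obtain ⟨R, hR, h⟩ := cOver_eq U E
  obtain ⟨C, hC⟩ := deg_one_sum E
  refine ⟨_, cOver U E, R, C, hR, fun s hs => hasSum_cOver U E s hs, hC, fun p hp => ?_⟩
  rw [h p hp]
  have h2 := ncard_tower U F E p
  rw [hEd] at h2 ⊢
  exact if_congr (and_congr_right fun _ => h2) rfl rfl
end L1

open ArithmeticFunction in
lemma moebius_sum_pos (n : ℕ) (hn : 0 < n) :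
    0 < ∑ d ∈ n.divisors, ((ArithmeticFunction.moebius d : ℤ) : ℝ) / d := by
  have h := (ArithmeticFunction.sum_eq_iff_sum_mul_moebius_eq (R := ℝ) (f := fun k => (k.totient : ℝ))
    (g := fun k => (k : ℝ))).mp (fun k _ => by exact_mod_cast Nat.sum_totient k) n hn
  rw [Nat.sum_divisorsAntidiagonal (f := fun a b => ((ArithmeticFunction.moebius a : ℤ) : ℝ) * (b : ℝ))] at h
  have hn' : (0:ℝ) < n := by exact_mod_cast hn
  have h2 : ∑ d ∈ n.divisors, ((ArithmeticFunction.moebius d : ℤ) : ℝ) / d = n.totient / n := by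
    rw [← h, Finset.sum_div]
    refine Finset.sum_congr rfl fun d hd => ?_
    have hd0 : (d:ℝ) ≠ 0 := by exact_mod_cast (Nat.pos_of_mem_divisors hd).ne'
    rw [Nat.cast_div (Nat.dvd_of_mem_divisors hd) hd0]
    field_simp
  rw [h2]
  have : (0:ℝ) < n.totient := by exact_mod_cast Nat.totient_pos.mpr hn
  positivity

open Classical in
lemma moebius_sum_one (n g : ℕ) (hn : 0 < n) (hg : g ∣ n) :
    ∑ d ∈ n.divisors, (if d ∣ g then ((ArithmeticFunction.moebius d : ℤ) : ℝ) else 0) = if g = 1 then 1 else 0 := by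
  rw [← Finset.sum_filter]
  have : n.divisors.filter (· ∣ g) = g.divisors := by
    ext d
    simp only [Finset.mem_filter, Nat.mem_divisors]
    constructor
    · rintro ⟨_, h⟩; exact ⟨h, fun h0 => by subst h0; simp at hg; omega⟩
    · rintro ⟨h, _⟩; exact ⟨⟨h.trans hg, hn.ne'⟩, h⟩
  rw [this]
  have h := congrArg (fun f => f g) (ArithmeticFunction.coe_zeta_mul_coe_moebius (R := ℝ))
  simp only [ArithmeticFunction.coe_zeta_mul_apply, ArithmeticFunction.one_apply,
    ArithmeticFunction.intCoe_apply] at h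
  exact h.trans (by congr)

lemma analytic_key {ι : Type*} (N : ι → ℕ) (hN : ∀ i, 1 ≤ N i) (S : Finset ℕ) (a : ℕ → ℝ) (ha : 0 < ∑ d ∈ S, a d)
    (D : ℕ → ℝ → ℝ) (c : ℕ → ι → ℕ) (C : ℕ → ℝ)
    (h1 : ∀ d ∈ S, ∀ s > 1, HasSum (fun p => (c d p : ℝ) * (N p : ℝ) ^ (-s)) (D d s))
    (h2 : ∀ d ∈ S, ∀ᶠ s in 𝓝[>] (1:ℝ), |D d s + Real.log (s - 1)| ≤ C d)
    (T : Set ι) (hT : T.Finite) (h3 : ∀ p ∉ T, ∑ d ∈ S, a d * c d p = 0) : False := by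
  have hb : ∀ s > 1, ∑ d ∈ S, a d * D d s ≤ ∑ p ∈ hT.toFinset, |∑ d ∈ S, a d * c d p| := by
    intro s hs
    have e := hasSum_sum (f := fun d p => a d * ((c d p : ℝ) * (N p : ℝ) ^ (-s))) (s := S)
      (fun d hd => (h1 d hd s hs).mul_left (a d))
    have e2 : HasSum (fun p => (∑ d ∈ S, a d * c d p) * (N p : ℝ) ^ (-s))
        (∑ p ∈ hT.toFinset, (∑ d ∈ S, a d * c d p) * (N p : ℝ) ^ (-s)) := by
      apply hasSum_sum_of_ne_finset_zero
      intro p hp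
      rw [h3 p (by simpa using hp), zero_mul]
    have e3 := e.unique (by simpa [Finset.sum_mul, mul_assoc] using e2)
    rw [e3]
    refine Finset.sum_le_sum fun p _ => ?_
    have e4 : ∑ x ∈ S, a x * ((c x p : ℝ) * (N p : ℝ) ^ (-s)) =
        (∑ x ∈ S, a x * (c x p : ℝ)) * (N p : ℝ) ^ (-s) := by
      rw [Finset.sum_mul]; exact Finset.sum_congr rfl fun _ _ => by ring
    rw [e4]
    refine (le_abs_self _).trans ?_
    rw [abs_mul]
    refine mul_le_of_le_one_right (abs_nonneg _) ?_
    rw [abs_of_nonneg (by positivity)]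
    exact Real.rpow_le_one_of_one_le_of_nonpos (by exact_mod_cast hN p) (by linarith)
  have hev : ∀ᶠ s in 𝓝[>] (1:ℝ), ∀ d ∈ S, |D d s + Real.log (s - 1)| ≤ C d := by
    rw [Finset.eventually_all]; exact h2
  have hlog : Tendsto (fun s : ℝ => Real.log (s - 1)) (𝓝[>] 1) atBot := by
    refine Real.tendsto_log_nhdsGT_zero.comp ?_
    refine tendsto_nhdsWithin_iff.mpr ⟨?_, ?_⟩
    · refine Tendsto.mono_left ?_ nhdsWithin_le_nhds
      have : Tendsto (fun s : ℝ => s - 1) (𝓝 1) (𝓝 (1 - 1)) := tendsto_id.sub_const 1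
      simpa using this
    · filter_upwards [self_mem_nhdsWithin] with s hs
      exact sub_pos.mpr (Set.mem_Ioi.mp hs)
  set A := ∑ d ∈ S, a d
  set B := ∑ p ∈ hT.toFinset, |∑ d ∈ S, a d * c d p|
  obtain ⟨s, hs1, hs2, hs3⟩ := (hev.and ((hlog.eventually_lt_atBot (-((B + ∑ d ∈ S, |a d| * C d) / A))).and
    self_mem_nhdsWithin)).exists
  have hbs := hb s hs3
  have : -(∑ d ∈ S, |a d| * C d) ≤ ∑ d ∈ S, a d * (D d s + Real.log (s - 1)) := by
    rw [← Finset.sum_neg_distrib]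
    refine Finset.sum_le_sum fun d hd => ?_
    have := mul_le_mul_of_nonneg_left (hs1 d hd) (abs_nonneg (a d))
    rw [← abs_mul] at this
    exact (neg_le_neg this).trans (neg_abs_le _)
  simp only [mul_add, Finset.sum_add_distrib, ← Finset.sum_mul] at this
  change _ ≤ _ + A * _ at this
  have h6 := mul_lt_mul_of_pos_left hs2 ha
  rw [mul_neg, mul_div_cancel₀ _ ha.ne'] at h6
  linarith

/-- Lemma: if `U/K` is Galois, `F/U` is cyclic and `F/K` is Galois (all number fields), then
there are infinitely many primes of `U` that do not split in `F/U` (exactly one prime of `F`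
above them) and lie above a prime of `K` that splits completely in `U/K` (the number of
primes of `U` above it is `[U : K]`). -/
theorem infinitely_many_nonsplit_primes_over_split_primes
    (K U F : Type*) [Field K] [Field U] [Field F]
    [NumberField K] [NumberField U] [NumberField F]
    [Algebra K U] [Algebra U F] [Algebra K F] [IsScalarTower K U F]
    [IsGalois K U] [IsGalois U F] [IsCyclic (F ≃ₐ[U] F)] [IsGalois K F] :
    {𝔭U : HeightOneSpectrum (𝓞 U) |
        (∃! w : HeightOneSpectrum (𝓞 F),
          w.asIdeal.comap (algebraMap (𝓞 U) (𝓞 F)) = 𝔭U.asIdeal) ∧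
        {w : HeightOneSpectrum (𝓞 U) |
            w.asIdeal.comap (algebraMap (𝓞 K) (𝓞 U)) =
              𝔭U.asIdeal.comap (algebraMap (𝓞 K) (𝓞 U))}.ncard =
          Module.finrank K U}.Infinite := by
  by_contra hS
  rw [Set.not_infinite] at hS
  set S : Set (HeightOneSpectrum (𝓞 U)) := _
  change S.Finite at hS
  set n := Module.finrank U F with hn
  have hn0 : 0 < n := Module.finrank_pos
  choose! D c R C hR h1 h2 h3 using exists_partB U F
  obtain ⟨R0, hR0, hram⟩ := finite_ramified K U
  have hR1 : ((underHOS K U) ⁻¹' R0).Finite := by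
    refine hR0.preimage' fun q _ => (finite_hos K U q).subset fun P hP => ?_
    exact congrArg HeightOneSpectrum.asIdeal hP
  have hR2 : (⋃ d ∈ n.divisors, R d).Finite :=
    Set.Finite.biUnion n.divisors.finite_toSet fun d hd => hR d (Nat.dvd_of_mem_divisors hd)
  refine analytic_key (fun p : HeightOneSpectrum (𝓞 U) => Ideal.absNorm p.asIdeal)
    (fun p => (norm_pos U p).le) n.divisors
    (fun d => ((ArithmeticFunction.moebius d : ℤ) : ℝ) / d) (moebius_sum_pos n hn0) D c C
    (fun d hd => h1 d (Nat.dvd_of_mem_divisors hd)) (fun d hd => h2 d (Nat.dvd_of_mem_divisors hd))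
    _ ((hS.union hR1).union hR2) fun p hp => ?_
  simp only [Set.mem_union, not_or, Set.mem_iUnion, not_exists] at hp
  obtain ⟨⟨hpS, hp1⟩, hp2⟩ := hp
  have hpp := p.isPrime
  set g := (p.asIdeal.primesOver (𝓞 F)).ncard with hg
  have hc : ∀ d ∈ n.divisors, ((ArithmeticFunction.moebius d : ℤ) : ℝ) / d * c d p =
      if (Ideal.absNorm p.asIdeal).Prime then
        (if d ∣ g then ((ArithmeticFunction.moebius d : ℤ) : ℝ) else 0) else 0 := by
    intro d hd
    rw [h3 d (Nat.dvd_of_mem_divisors hd) p (hp2 d hd)]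
    have hd0 : (d : ℝ) ≠ 0 := by exact_mod_cast (Nat.pos_of_mem_divisors hd).ne'
    by_cases ha : (Ideal.absNorm p.asIdeal).Prime
    · by_cases hb : d ∣ g
      · rw [if_pos ⟨ha, hb⟩, if_pos ha, if_pos hb, div_mul_cancel₀ _ hd0]
      · rw [if_neg (fun h => hb h.2), if_pos ha, if_neg hb, Nat.cast_zero, mul_zero]
    · rw [if_neg (fun h => ha h.1), if_neg ha, Nat.cast_zero, mul_zero]
  rw [Finset.sum_congr rfl hc]
  by_cases hprime : (Ideal.absNorm p.asIdeal).Prime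
  swap
  · simp [hprime]
  simp only [hprime, if_true]
  have hgn : g ∣ n := by
    obtain ⟨⟨Q, hQ, hQp⟩⟩ : Nonempty (p.asIdeal.primesOver (𝓞 F)) := inferInstance
    exact ⟨_, (efg U F p.asIdeal Q).symm⟩
  rw [moebius_sum_one n g hn0 hgn, if_neg]
  intro hg1
  refine hpS ⟨?_, ?_⟩
  · rw [hg, ← ncard_hos U F p] at hg1
    obtain ⟨w, hw⟩ := Set.ncard_eq_one.mp hg1
    exact ⟨w, hw.ge rfl, fun y hy => hw.le hy⟩
  · have hover : p.asIdeal.LiesOver (underHOS K U p).asIdeal := ⟨rfl⟩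
    have hup := (underHOS K U p).isPrime
    have h4 := ncard_hos K U (underHOS K U p)
    have h5 := efg K U (underHOS K U p).asIdeal p.asIdeal
    rw [hram _ hp1 p.asIdeal hpp hover, ((norm_prime_iff K U (underHOS K U p).asIdeal p.asIdeal).mp hprime).2,
      mul_one, mul_one] at h5
    exact h4.trans h5
end

section
/- For every rational prime q and every integer m ≥ 1 there exists a number field K such that: K/ℚ is Galois with cyclic Galois group of order q^m; K is totally real (every embedding of K into ℂ has image contained in ℝ); and q does not split in K/ℚ, i.e. there is exactly one prime of K lying above q. -/
open NumberField

/-- The group theoretic input: a subgroup of `(ZMod (q ^ (k + 1)))ˣ` containing `-1`, with cyclic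
quotient of order `q ^ m`. -/
theorem exists_subgroup_aux (q m : ℕ) (hq : q.Prime) :
    ∃ (k : ℕ) (H : Subgroup (ZMod (q ^ (k + 1)))ˣ),
      H.index = q ^ m ∧ IsCyclic ((ZMod (q ^ (k + 1)))ˣ ⧸ H) ∧ -1 ∈ H := by
  have hcard : ∀ n : ℕ, Nat.card (ZMod (q ^ (n + 1)))ˣ = q ^ n * (q - 1) := by
    intro n
    have : NeZero (q ^ (n + 1)) := ⟨pow_ne_zero _ hq.ne_zero⟩
    rw [Nat.card_eq_fintype_card, ZMod.card_units_eq_totient, Nat.totient_prime_pow_succ hq]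
  by_cases h2 : q = 2
  · subst h2
    refine ⟨m + 1, Subgroup.zpowers (-1), ?_⟩
    have hne : (-1 : (ZMod (2 ^ (m + 1 + 1)))ˣ) ≠ 1 := by
      intro h
      have h1 := congrArg Units.val h
      have h3 := congrArg (ZMod.castHom (show 4 ∣ 2 ^ (m + 1 + 1) from ⟨2 ^ m, by ring⟩) (ZMod 4)) h1
      simp only [Units.val_neg, Units.val_one, map_neg, map_one] at h3
      revert h3
      decide
    have ho : orderOf (-1 : (ZMod (2 ^ (m + 1 + 1)))ˣ) = 2 :=
      orderOf_eq_prime (by simp) hne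
    have hidx : (Subgroup.zpowers (-1 : (ZMod (2 ^ (m + 1 + 1)))ˣ)).index = 2 ^ m := by
      have := (Subgroup.zpowers (-1 : (ZMod (2 ^ (m + 1 + 1)))ˣ)).card_mul_index
      rw [Nat.card_zpowers, ho, hcard] at this
      have h21 : 2 - 1 = 1 := rfl
      rw [h21, mul_one, pow_succ' 2 m] at this
      exact Nat.eq_of_mul_eq_mul_left two_pos this
    refine ⟨hidx, ?_, Subgroup.mem_zpowers _⟩
    have h5 : IsUnit (5 : ZMod (2 ^ (m + 1 + 1))) := by
      have := (ZMod.unitOfCoprime 5 (show Nat.Coprime 5 (2 ^ (m + 1 + 1)) from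
        Nat.Coprime.pow_right _ (by norm_num))).isUnit
      simpa using this
    obtain ⟨u, hu⟩ := h5
    have huo : orderOf u = 2 ^ m := by
      rw [← orderOf_units, hu]
      exact ZMod.orderOf_five m
    have : Finite ((ZMod (2 ^ (m + 1 + 1)))ˣ ⧸ Subgroup.zpowers (-1 : (ZMod (2 ^ (m + 1 + 1)))ˣ)) :=
      inferInstance
    refine isCyclic_of_orderOf_eq_card
      (QuotientGroup.mk u : (ZMod (2 ^ (m + 1 + 1)))ˣ ⧸ Subgroup.zpowers (-1)) ?_
    have hc : Nat.card ((ZMod (2 ^ (m + 1 + 1)))ˣ ⧸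
      Subgroup.zpowers (-1 : (ZMod (2 ^ (m + 1 + 1)))ˣ)) = 2 ^ m := hidx
    rw [hc]
    refine Nat.dvd_antisymm (hc ▸ orderOf_dvd_natCard _) ?_
    rw [← huo]
    apply orderOf_dvd_of_pow_eq_one
    set n := orderOf (QuotientGroup.mk u : (ZMod (2 ^ (m + 1 + 1)))ˣ ⧸ Subgroup.zpowers (-1))
    have hn : (QuotientGroup.mk (u ^ n) : (ZMod (2 ^ (m + 1 + 1)))ˣ ⧸ Subgroup.zpowers (-1)) = 1 := by
      rw [QuotientGroup.mk_pow]
      exact pow_orderOf_eq_one _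
    rw [QuotientGroup.eq_one_iff, Subgroup.mem_zpowers_iff] at hn
    obtain ⟨j, hj⟩ := hn
    rcases Int.even_or_odd j with he | hodd
    · rw [← hj, he.neg_one_zpow]
    · exfalso
      rw [hodd.neg_one_zpow] at hj
      have h1 := congrArg Units.val hj
      have h3 := congrArg (ZMod.castHom (show 4 ∣ 2 ^ (m + 1 + 1) from ⟨2 ^ m, by ring⟩) (ZMod 4)) h1
      simp only [Units.val_neg, Units.val_one, map_neg, map_one, Units.val_pow_eq_pow_val, hu,
        map_pow, map_ofNat] at h3
      rw [show (5 : ZMod 4) = 1 from rfl, one_pow] at h3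
      revert h3
      decide
  · have := ZMod.isCyclic_units_of_prime_pow q hq h2 (m + 1)
    have : NeZero (q ^ (m + 1)) := ⟨pow_ne_zero _ hq.ne_zero⟩
    refine ⟨m, (powMonoidHom (q - 1) : (ZMod (q ^ (m + 1)))ˣ →* _).ker, ?_, inferInstance, ?_⟩
    · rw [IsCyclic.index_powMonoidHom_ker, hcard, Nat.gcd_mul_left_left,
        Nat.mul_div_cancel _ (Nat.sub_pos_of_lt hq.one_lt)]
    · rw [MonoidHom.mem_ker, powMonoidHom_apply]
      exact (hq.even_sub_one h2).neg_one_pow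

/-- Non-splitting descends to subfields. -/
theorem existsUnique_prime_descend {K L : Type*} [Field K] [NumberField K] [Field L] [NumberField L]
    (f : K →+* L) (q : ℕ) (h : ∃! P : Ideal (𝓞 L), P.IsPrime ∧ (q : 𝓞 L) ∈ P) :
    ∃! P : Ideal (𝓞 K), P.IsPrime ∧ (q : 𝓞 K) ∈ P := by
  let : Algebra K L := f.toAlgebra
  obtain ⟨Q, ⟨hQ, hqQ⟩, huniq⟩ := h
  refine ⟨Q.comap (algebraMap (𝓞 K) (𝓞 L)), ⟨Ideal.comap_isPrime _ _, ?_⟩, ?_⟩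
  · rw [Ideal.mem_comap, map_natCast]
    exact hqQ
  · rintro P ⟨hP, hqP⟩
    obtain ⟨Q', hQ', hc⟩ := Ideal.exists_ideal_over_prime_of_isIntegral_of_isDomain (S := 𝓞 L) P
      (by
        rw [(RingHom.injective_iff_ker_eq_bot _).mp
          (FaithfulSMul.algebraMap_injective (𝓞 K) (𝓞 L))]
        exact bot_le)
    have : Q' = Q := huniq Q' ⟨hQ', by
      rw [← hc, Ideal.mem_comap, map_natCast] at hqP
      exact hqP⟩
    rw [← this, hc]

theorem existsUnique_prime_cyclotomic (q k : ℕ) (hq : q.Prime) (L : Type*) [Field L] [NumberField L]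
    [IsCyclotomicExtension {q ^ (k + 1)} ℚ L] :
    ∃! P : Ideal (𝓞 L), P.IsPrime ∧ (q : 𝓞 L) ∈ P := by
  have := Fact.mk hq
  have : NeZero (q ^ (k + 1)) := ⟨pow_ne_zero _ hq.ne_zero⟩
  have hζ := IsCyclotomicExtension.zeta_spec (q ^ (k + 1)) ℚ L
  refine ⟨Ideal.span {hζ.toInteger - 1},
    ⟨IsCyclotomicExtension.Rat.isPrime_span_zeta_sub_one q k hζ,
      IsCyclotomicExtension.Rat.p_mem_span_zeta_sub_one q k hζ⟩, ?_⟩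
  rintro P ⟨hP, hqP⟩
  have : P.LiesOver (Ideal.span {(q : ℤ)}) := by
    refine ⟨?_⟩
    have hmax : (Ideal.span {(q : ℤ)}).IsMaximal :=
      PrincipalIdealRing.isMaximal_of_irreducible (Nat.prime_iff_prime_int.mp hq).irreducible
    refine hmax.eq_of_le (Ideal.IsPrime.under ℤ P).ne_top ?_
    rw [Ideal.span_singleton_le_iff_mem, Ideal.under_def, Ideal.mem_comap]
    simpa using hqP
  exact IsCyclotomicExtension.Rat.eq_span_zeta_sub_one_of_liesOver q k L hζ P

/-- Lemma: for every rational prime `q` and every `m ≥ 1` there exists a totally real cyclic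
extension `K` of `ℚ` of degree `q^m` in which `q` does not split (there is exactly one prime
of `K` above `q`). -/
theorem exists_totally_real_cyclic_qm_extension_q_nonsplit
    (q m : ℕ) (hq : q.Prime) (hm : 1 ≤ m) :
    ∃ K : IntermediateField ℚ ℂ,
      FiniteDimensional ℚ K ∧
      IsGalois ℚ K ∧
      IsCyclic (K ≃ₐ[ℚ] K) ∧
      Module.finrank ℚ K = q ^ m ∧
      (∀ σ : K →+* ℂ, ∀ x : K, (σ x).im = 0) ∧
      (∃! P : Ideal (𝓞 K), P.IsPrime ∧ (q : 𝓞 K) ∈ P) := by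
  obtain ⟨k, hk⟩ := exists_subgroup_aux q m hq
  have hqn : ∃ n, n = q ^ (k + 1) := ⟨_, rfl⟩
  obtain ⟨n, hn⟩ := hqn
  have hn0 : NeZero n := ⟨hn ▸ pow_ne_zero _ hq.ne_zero⟩
  rw [← hn] at hk
  obtain ⟨H, hidx, hcyc, hneg⟩ := hk
  have hζ : IsPrimitiveRoot (Complex.exp (2 * Real.pi * Complex.I / n)) n :=
    Complex.isPrimitiveRoot_exp n hn0.out
  set ζ := Complex.exp (2 * Real.pi * Complex.I / n) with hζdef
  let L : IntermediateField ℚ ℂ := IntermediateField.adjoin ℚ {ζ}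
  have hL : IsCyclotomicExtension {n} ℚ L := by
    change IsCyclotomicExtension {n} ℚ (IntermediateField.adjoin ℚ {ζ}).toSubalgebra
    rw [IntermediateField.adjoin_simple_toSubalgebra_of_isAlgebraic
      (hζ.isIntegral hn0.out.bot_lt).tower_top.isAlgebraic]
    exact hζ.adjoin_isCyclotomicExtension ℚ
  have : NumberField L := IsCyclotomicExtension.numberField {n} ℚ L
  have : FiniteDimensional ℚ L := inferInstance
  have : IsGalois ℚ L := IsCyclotomicExtension.isGalois {n} ℚ L
  let e : Gal(L/ℚ) ≃* (ZMod n)ˣ := IsCyclotomicExtension.Rat.galEquivZMod n L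
  let H' : Subgroup Gal(L/ℚ) := H.comap e.toMonoidHom
  have : H.Normal := inferInstance
  have hH'n : H'.Normal := Subgroup.Normal.comap inferInstance _
  have hidx' : H'.index = q ^ m := by
    rw [← hidx]
    exact Subgroup.index_comap_of_surjective _ e.surjective
  have hcyc' : IsCyclic (Gal(L/ℚ) ⧸ H') := by
    have e2 : Gal(L/ℚ) ⧸ H' ≃* (ZMod n)ˣ ⧸ H := QuotientGroup.congr H' H e
      (Subgroup.map_comap_eq_self_of_surjective e.surjective H)
    exact e2.isCyclic.mpr hcyc
  let F : IntermediateField ℚ L := IntermediateField.fixedField H'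
  have : IsGalois ℚ F := IsGalois.of_fixedField_normal_subgroup H'
  let i : F ≃ₐ[ℚ] IntermediateField.lift F := IntermediateField.liftAlgEquiv F
  have hfd : FiniteDimensional ℚ (IntermediateField.lift F) := Module.Finite.equiv i.toLinearEquiv
  have hgal : IsGalois ℚ (IntermediateField.lift F) := IsGalois.of_algEquiv i
  refine ⟨IntermediateField.lift F, hfd, hgal, ?_, ?_, ?_, ?_⟩
  · have e3 : Gal(L/ℚ) ⧸ H' ≃* Gal(F/ℚ) := IsGalois.normalAutEquivQuotient H'
    exact (e3.trans (AlgEquiv.autCongr i)).isCyclic.mp hcyc'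
  · rw [← i.toLinearEquiv.finrank_eq, IntermediateField.finrank_eq_fixingSubgroup_index,
      IntermediateField.fixingSubgroup_fixedField, hidx']
  · intro σ x
    have hmem : σ x ∈ IntermediateField.lift F := by
      have h1 := @AlgHom.fieldRange_of_normal ℚ ℂ _ _ _ (IntermediateField.lift F) hgal.to_normal
        σ.toRatAlgHom
      exact h1.le ⟨x, rfl⟩
    obtain ⟨z, hz, hzx⟩ := hmem
    rw [← Complex.conj_eq_iff_im]
    let c : Gal(L/ℚ) := e.symm (-1)
    have hcH : c ∈ H' := by
      rw [Subgroup.mem_comap]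
      simpa [c] using hneg
    have hcz : c z = z := hz ⟨c, hcH⟩
    let ζ' : L := ⟨ζ, IntermediateField.mem_adjoin_simple_self ℚ ζ⟩
    have hζ'n : ζ' ^ n = 1 := Subtype.ext hζ.pow_eq_one
    have hcζ : c ζ' * ζ' = 1 := by
      rw [IsCyclotomicExtension.Rat.galEquivZMod_apply_of_pow_eq n L c hζ'n, ← pow_succ]
      have : IsCyclotomicExtension.Rat.galEquivZMod n L c = -1 := e.apply_symm_apply _
      rw [this]
      have hd : n ∣ ((-1 : (ZMod n)ˣ) : ZMod n).val + 1 := by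
        rw [← ZMod.natCast_eq_zero_iff]
        simp
      obtain ⟨d, hd⟩ := hd
      rw [hd, pow_mul, hζ'n, one_pow]
    have hext : (L.val.comp (c : L →ₐ[ℚ] L)) =
        ((Complex.conjAe.restrictScalars ℚ : ℂ →ₐ[ℚ] ℂ).comp L.val) := by
      refine IntermediateField.algHom_ext_of_eq_adjoin (s := {ζ}) _ rfl ?_
      rintro y hy
      obtain rfl := hy
      have h1 : (c ζ' : ℂ) * ζ = 1 := congrArg Subtype.val hcζ
      have hnorm : ‖ζ‖ = 1 := hζ.norm'_eq_one hn0.out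
      have h2 : (starRingEnd ℂ) ζ * ζ = 1 := by
        rw [mul_comm, Complex.mul_conj, Complex.normSq_eq_norm_sq, hnorm]
        simp
      exact mul_right_cancel₀ (hζ.ne_zero hn0.out) (h1.trans h2.symm)
    have h3 := DFunLike.congr_fun hext z
    have h4 : ((c z : L) : ℂ) = (starRingEnd ℂ) (z : ℂ) := h3
    rw [hcz] at h4
    have h5 : (z : ℂ) = σ x := hzx
    rw [← h5, ← h4]
  · have : NumberField (IntermediateField.lift F) := ⟨⟩
    exact existsUnique_prime_descend ((F.val : F →+* L).comp (i.symm : _ →+* F)) q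
      (by
        subst hn
        exact existsUnique_prime_cyclotomic q k hq L)
end
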